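/- Fix h ∈ 𝔥 with h ≠ 0 and ⟨h,h⟩ ≠ 0. Let 𝔥' and 𝔥'' be regular subspaces of 𝔥 and set h' = P_{𝔥'}(h), h'' = P_{𝔥''}(h). Then there exists σ ∈ O(𝔥) with σ(h) = h, σ(𝔥') = 𝔥'', and σ(h') = h'' if and only if all of the following hold: dim 𝔥' = dim 𝔥'', ⟨h',h'⟩ = ⟨h'',h''⟩, (h' = h if and only if h'' = h), and (h' = 0 if and only if h'' = 0). In other words, the O(𝔥)_h-orbits on Reg(𝔥)_h are exactly the fibers of the invariant (dim 𝔥', ⟨h',h'⟩, [h' = h], [h' = 0]). -/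

import Mathlib

/-- A subspace `W` is regular if the restriction of the bilinear form `B` to `W`
is nondegenerate. -/
def IsRegularSubspace {V : Type*} [AddCommGroup V] [Module ℂ V]
    (B : LinearMap.BilinForm ℂ V) (W : Submodule ℂ V) : Prop :=
  ∀ x ∈ W, (∀ y ∈ W, B x y = 0) → x = 0

/-- `IsOrthProj B W x y` : `y` is the orthogonal projection `P_W(x)` of `x` onto `W`. -/
def IsOrthProj {V : Type*} [AddCommGroup V] [Module ℂ V]
    (B : LinearMap.BilinForm ℂ V) (W : Submodule ℂ V) (x y : V) : Prop :=
  y ∈ W ∧ ∀ w ∈ W, B (x - y) w = 0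

/-!
An isometry `σ` with `σ(W) = W'` is the same as a pair of isometries `W ≃ W'` and `Wᗮ ≃ W'ᗮ`, and
it fixes `h` and carries `h'` to `h''` exactly when these carry `h'` to `h''` and `h - h'` to
`h - h''`. Over an algebraically closed field of characteristic not two, nondegenerate symmetric
forms of equal dimension are equivalent, and the isometry group of such a form acts transitively
on the nonzero vectors of any given norm, by products of reflections. So both isometries exist as
soon as the dimensions, the norms and the vanishing of the vectors agree, and for the second pair
this follows from `⟨h - h', h - h'⟩ = ⟨h, h⟩ - ⟨h', h'⟩`.
-/

open LinearMap LinearMap.BilinForm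

section Reflection

variable {R M : Type*} [CommRing R] [AddCommGroup M] [Module R M] {B : LinearMap.BilinForm R M}

theorem apply_sub_sub_self (hB : B.IsSymm) (u v : M) :
    B (u - v) (u - v) = B u u - 2 * B u v + B v v := by
  simp only [map_sub, LinearMap.sub_apply, hB.eq v u]
  ring

theorem apply_add_add_self (hB : B.IsSymm) (u v : M) :
    B (u + v) (u + v) = B u u + 2 * B u v + B v v := by
  simp only [map_add, LinearMap.add_apply, hB.eq v u]
  ring

theorem exists_isometryEquiv_apply_eq_of_isReflective_sub (hB : B.IsSymm) {u v : M}
    (huv : B u u = B v v) (hr : IsReflective B (u - v)) :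
    ∃ e : B.IsometryEquiv B, e u = v := by
  refine ⟨⟨Module.reflection (IsReflective.coroot_apply_self B hr),
    IsReflective.isOrthogonal_reflection B hr (isSymm_iff.1 hB)⟩, ?_⟩
  have coroot_u : IsReflective.coroot B hr u = 1 := by
    apply hr.regular.left
    change B (u - v) (u - v) * _ = B (u - v) (u - v) * 1
    rw [IsReflective.apply_self_mul_coroot_apply, apply_sub_sub_self hB, map_sub,
      LinearMap.sub_apply, hB.eq v u]
    linear_combination huv
  change Module.reflection (IsReflective.coroot_apply_self B hr) u = v
  rw [Module.reflection_apply, coroot_u, one_smul, sub_sub_cancel]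

end Reflection

theorem exists_apply_ne_zero_and_apply_ne_zero {R M N P : Type*} [Semiring R]
    [AddCommMonoid M] [Module R M] [AddCommMonoid N] [Module R N] [AddCommMonoid P] [Module R P]
    {f : M →ₗ[R] N} {g : M →ₗ[R] P} (hf : f ≠ 0) (hg : g ≠ 0) : ∃ x, f x ≠ 0 ∧ g x ≠ 0 := by
  obtain ⟨x, hx⟩ := DFunLike.ne_iff.1 hf
  obtain ⟨y, hy⟩ := DFunLike.ne_iff.1 hg
  by_cases hgx : g x = 0
  · by_cases hfy : f y = 0
    · exact ⟨x + y, by simpa [hfy] using hx, by simpa [hgx] using hy⟩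
    · exact ⟨y, hfy, hy⟩
  · exact ⟨x, hx, hgx⟩

section Transitivity

variable {K M : Type*} [Field K] [AddCommGroup M] [Module K M] {B : LinearMap.BilinForm K M}

theorem exists_isometryEquiv_apply_eq_of_apply_sub_ne_zero (hB : B.IsSymm) {u v : M}
    (huv : B u u = B v v) (hne : B (u - v) (u - v) ≠ 0) :
    ∃ e : B.IsometryEquiv B, e u = v :=
  exists_isometryEquiv_apply_eq_of_isReflective_sub hB huv
    ⟨.of_ne_zero hne, fun _ ↦ hne.isUnit.dvd⟩

variable [NeZero (2 : K)]

theorem exists_isometryEquiv_apply_eq_of_anisotropic (hB : B.IsSymm) {u v : M}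
    (huv : B u u = B v v) (hu : B u u ≠ 0) : ∃ e : B.IsometryEquiv B, e u = v := by
  by_cases hsub : B (u - v) (u - v) = 0
  · have hadd : B (u - -v) (u - -v) ≠ 0 := by
      rw [sub_neg_eq_add, apply_add_add_self hB]
      rw [apply_sub_sub_self hB] at hsub
      intro hadd
      have : 2 * (2 * B u u) = 0 := by linear_combination hadd + hsub + 2 * huv
      exact mul_ne_zero two_ne_zero (mul_ne_zero two_ne_zero hu) this
    obtain ⟨e, he⟩ := exists_isometryEquiv_apply_eq_of_apply_sub_ne_zero hB
      (v := -v) (by simpa using huv) hadd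
    exact ⟨e.trans ⟨LinearEquiv.neg K, by simp⟩, show -(e u) = v by rw [he, neg_neg]⟩
  · exact exists_isometryEquiv_apply_eq_of_apply_sub_ne_zero hB huv hsub

theorem exists_isometryEquiv_apply_eq_of_isotropic_of_apply_ne_zero (hB : B.IsSymm) {u v : M}
    (hu : B u u = 0) (hv : B v v = 0) (huv : B u v ≠ 0) :
    ∃ e : B.IsometryEquiv B, e u = v :=
  exists_isometryEquiv_apply_eq_of_apply_sub_ne_zero hB (hu.trans hv.symm) <| by
    rw [apply_sub_sub_self hB, hu, hv]
    simpa [two_ne_zero] using huv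

theorem exists_apply_add_smul_self_eq_zero (hB : B.IsSymm) {u x : M}
    (hu : B u u = 0) (hux : B u x ≠ 0) : ∃ c : K, B (x + c • u) (x + c • u) = 0 := by
  refine ⟨-B x x / (2 * B u x), ?_⟩
  have h2 : (2 : K) ≠ 0 := two_ne_zero
  simp only [apply_add_add_self hB, map_smul, LinearMap.smul_apply, smul_eq_mul, hu, hB.eq x u]
  field_simp
  ring

theorem exists_isometryEquiv_apply_eq_of_isotropic (hB : B.IsSymm) (hnd : B.Nondegenerate)
    {u v : M} (hu : B u u = 0) (hv : B v v = 0) (hu0 : u ≠ 0) (hv0 : v ≠ 0) :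
    ∃ e : B.IsometryEquiv B, e u = v := by
  by_cases huv : B u v = 0
  · -- No reflection carries `u` to `v`; pass through an isotropic `w` orthogonal to neither.
    have hBne {z : M} (hz : z ≠ 0) : B z ≠ 0 :=
      mt (fun hBz ↦ hnd.1 z fun y ↦ by rw [hBz, LinearMap.zero_apply]) hz
    obtain ⟨x, hux, hvx⟩ := exists_apply_ne_zero_and_apply_ne_zero (hBne hu0) (hBne hv0)
    obtain ⟨c, hw⟩ := exists_apply_add_smul_self_eq_zero hB hu hux
    obtain ⟨e, he⟩ := exists_isometryEquiv_apply_eq_of_isotropic_of_apply_ne_zero hB hu hw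
      (by simpa [hu] using hux)
    obtain ⟨f, hf⟩ := exists_isometryEquiv_apply_eq_of_isotropic_of_apply_ne_zero hB hw hv
      (by simpa [hB.eq x v, huv] using hvx)
    exact ⟨e.trans f, (congrArg f he).trans hf⟩
  · exact exists_isometryEquiv_apply_eq_of_isotropic_of_apply_ne_zero hB hu hv huv

theorem exists_isometryEquiv_self_apply_eq (hB : B.IsSymm) (hnd : B.Nondegenerate)
    {u v : M} (huv : B u u = B v v) (h0 : u = 0 ↔ v = 0) :
    ∃ e : B.IsometryEquiv B, e u = v := by
  by_cases hu : B u u = 0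
  · by_cases hu0 : u = 0
    · exact ⟨.refl B, hu0.trans (h0.1 hu0).symm⟩
    · exact exists_isometryEquiv_apply_eq_of_isotropic hB hnd hu (huv ▸ hu) hu0 (h0.not.1 hu0)
  · exact exists_isometryEquiv_apply_eq_of_anisotropic hB huv hu

end Transitivity

section IsAlgClosed

variable {K M N : Type*} [Field K] [NeZero (2 : K)] [IsAlgClosed K]
  [AddCommGroup M] [Module K M] [FiniteDimensional K M]
  [AddCommGroup N] [Module K N] [FiniteDimensional K N]
  {B : LinearMap.BilinForm K M} {C : LinearMap.BilinForm K N}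

theorem equivalent_of_finrank_eq (hB : B.IsSymm) (hC : C.IsSymm)
    (hBnd : B.Nondegenerate) (hCnd : C.Nondegenerate)
    (hd : Module.finrank K M = Module.finrank K N) : B.Equivalent C := by
  let _ : Invertible (2 : K) := invertibleOfNonzero two_ne_zero
  have hBsq := QuadraticForm.equivalent_weightedSumSquares_of_isAlgClosed B.toQuadraticMap
    (by rw [QuadraticMap.associated_left_inverse K hB.eq]; exact hBnd.1)
  have hCsq := QuadraticForm.equivalent_weightedSumSquares_of_isAlgClosed C.toQuadraticMap
    (by rw [QuadraticMap.associated_left_inverse K hC.eq]; exact hCnd.1)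
  rw [hd] at hBsq
  obtain ⟨e⟩ := hBsq.trans hCsq.symm
  have hcomp : C.comp (e : M →ₗ[K] N) e = B :=
    ext_of_isSymm ⟨fun x y ↦ hC.eq (e x) (e y)⟩ hB e.map_app
  exact ⟨⟨e.toLinearEquiv, LinearMap.congr_fun₂ hcomp⟩⟩

theorem exists_isometryEquiv_apply_eq (hB : B.IsSymm) (hC : C.IsSymm)
    (hBnd : B.Nondegenerate) (hCnd : C.Nondegenerate)
    (hd : Module.finrank K M = Module.finrank K N)
    {u : M} {v : N} (huv : B u u = C v v) (h0 : u = 0 ↔ v = 0) :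
    ∃ e : B.IsometryEquiv C, e u = v := by
  obtain ⟨e⟩ := equivalent_of_finrank_eq hB hC hBnd hCnd hd
  obtain ⟨f, hf⟩ := exists_isometryEquiv_self_apply_eq hC hCnd (u := e u) (v := v)
    ((e.map_app u u).trans huv) ((EmbeddingLike.map_eq_zero_iff (f := e)).trans h0)
  exact ⟨e.trans f, hf⟩

end IsAlgClosed

section OrthogonalSum

variable {R M N : Type*} [CommRing R] [AddCommGroup M] [Module R M] [AddCommGroup N] [Module R N]
  {B : LinearMap.BilinForm R M} {C : LinearMap.BilinForm R N}
  {W : Submodule R M} {W' : Submodule R N}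

theorem apply_add_add_of_mem_orthogonal (hB : B.IsRefl) {a a' b b' : M} (ha : a ∈ W)
    (ha' : a' ∈ W) (hb : b ∈ B.orthogonal W) (hb' : b' ∈ B.orthogonal W) :
    B (a + b) (a' + b') = B a a' + B b b' := by
  simp [hb' a ha, hB _ _ (hb a' ha')]

theorem exists_isometryEquiv_extending (hB : B.IsRefl) (hC : C.IsRefl)
    (hW : IsCompl W (B.orthogonal W)) (hW' : IsCompl W' (C.orthogonal W'))
    (e : (B.restrict W).IsometryEquiv (C.restrict W'))
    (f : (B.restrict (B.orthogonal W)).IsometryEquiv (C.restrict (C.orthogonal W'))) :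
    ∃ σ : B.IsometryEquiv C, (∀ a : W, σ a = e a) ∧ ∀ b : B.orthogonal W, σ b = f b := by
  let s := W.prodEquivOfIsCompl _ hW
  let t := W'.prodEquivOfIsCompl _ hW'
  let σ : M ≃ₗ[R] N := s.symm ≪≫ₗ e.toLinearEquiv.prodCongr f.toLinearEquiv ≪≫ₗ t
  have hσ (p : W × B.orthogonal W) : σ (s p) = (e p.1 : N) + f p.2 := by
    simp [σ, t]
  have σ_isometry (x y : M) : C (σ x) (σ y) = B x y := by
    obtain ⟨p, rfl⟩ := s.surjective x
    obtain ⟨q, rfl⟩ := s.surjective y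
    calc C (σ (s p)) (σ (s q))
        = C (e p.1) (e q.1) + C (f p.2) (f q.2) := by
          rw [hσ, hσ, apply_add_add_of_mem_orthogonal hC (e p.1).2 (e q.1).2 (f p.2).2 (f q.2).2]
      _ = B p.1 q.1 + B p.2 q.2 := congrArg₂ (· + ·) (e.map_app q.1 p.1) (f.map_app q.2 p.2)
      _ = B (s p) (s q) :=
          (apply_add_add_of_mem_orthogonal hB p.1.2 q.1.2 p.2.2 q.2.2).symm
  exact ⟨⟨σ, σ_isometry⟩, fun a ↦ by simpa [s] using! hσ (a, 0),
    fun b ↦ by simpa [s] using! hσ (0, b)⟩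

theorem map_eq_of_forall_apply_eq {σ : M →ₗ[R] N} (e : W ≃ₗ[R] W') (h : ∀ a : W, σ a = e a) :
    W.map σ = W' := by
  ext y
  constructor
  · rintro ⟨x, hx, rfl⟩
    exact h ⟨x, hx⟩ ▸ (e ⟨x, hx⟩).2
  · intro hy
    exact ⟨e.symm ⟨y, hy⟩, (e.symm ⟨y, hy⟩).2, by simp [h]⟩

end OrthogonalSum

theorem nondegenerate_restrict_orthogonal {K V : Type*} [Field K] [AddCommGroup V] [Module K V]
    [FiniteDimensional K V] {B : LinearMap.BilinForm K V} (hB : B.IsRefl) (hnd : B.Nondegenerate)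
    {W : Submodule K V} (hW : (B.restrict W).Nondegenerate) :
    (B.restrict (B.orthogonal W)).Nondegenerate := by
  rw [restrict_nondegenerate_iff_isCompl_orthogonal hB, orthogonal_orthogonal hnd hB]
  exact (isCompl_orthogonal_of_restrict_nondegenerate hB hW).symm

section Orbits

variable {K V V' : Type*} [Field K] [NeZero (2 : K)] [IsAlgClosed K]
  [AddCommGroup V] [Module K V] [FiniteDimensional K V]
  [AddCommGroup V'] [Module K V'] [FiniteDimensional K V']

theorem exists_isometryEquiv_map_eq_and_apply_eq
    {B : LinearMap.BilinForm K V} {C : LinearMap.BilinForm K V'}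
    (hB : B.IsSymm) (hC : C.IsSymm) (hBnd : B.Nondegenerate) (hCnd : C.Nondegenerate)
    (hV : Module.finrank K V = Module.finrank K V')
    {W : Submodule K V} {W' : Submodule K V'}
    (hW : (B.restrict W).Nondegenerate) (hW' : (C.restrict W').Nondegenerate)
    (hd : Module.finrank K W = Module.finrank K W')
    {a b : V} {a' b' : V'} (ha : a ∈ W) (ha' : a' ∈ W')
    (hb : b ∈ B.orthogonal W) (hb' : b' ∈ C.orthogonal W')
    (haa : B a a = C a' a') (hbb : B b b = C b' b')
    (ha0 : a = 0 ↔ a' = 0) (hb0 : b = 0 ↔ b' = 0) :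
    ∃ σ : B.IsometryEquiv C, W.map (σ : V →ₗ[K] V') = W' ∧ σ a = a' ∧ σ b = b' := by
  have hd' : Module.finrank K (B.orthogonal W) = Module.finrank K (C.orthogonal W') := by
    rw [finrank_orthogonal hBnd, finrank_orthogonal hCnd, hV, hd]
  obtain ⟨e, he⟩ := exists_isometryEquiv_apply_eq (hB.restrict W) (hC.restrict W') hW hW' hd
    (u := ⟨a, ha⟩) (v := ⟨a', ha'⟩) haa (by simpa using ha0)
  obtain ⟨f, hf⟩ := exists_isometryEquiv_apply_eq (hB.restrict _) (hC.restrict _)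
    (nondegenerate_restrict_orthogonal hB.isRefl hBnd hW)
    (nondegenerate_restrict_orthogonal hC.isRefl hCnd hW') hd'
    (u := ⟨b, hb⟩) (v := ⟨b', hb'⟩) hbb (by simpa using hb0)
  obtain ⟨σ, hσe, hσf⟩ := exists_isometryEquiv_extending hB.isRefl hC.isRefl
    (isCompl_orthogonal_of_restrict_nondegenerate hB.isRefl hW)
    (isCompl_orthogonal_of_restrict_nondegenerate hC.isRefl hW') e f
  exact ⟨σ, map_eq_of_forall_apply_eq e.toLinearEquiv hσe,
    (hσe ⟨a, ha⟩).trans (congrArg Subtype.val he), (hσf ⟨b, hb⟩).trans (congrArg Subtype.val hf)⟩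

theorem stabilizer_orbits_reg_h_anisotropic_general {B : LinearMap.BilinForm K V}
    (hB : B.IsSymm) (hnd : B.Nondegenerate) {W W' : Submodule K V}
    (hW : (B.restrict W).Nondegenerate) (hW' : (B.restrict W').Nondegenerate)
    {h h' h'' : V} (hh' : h' ∈ W) (hh'' : h'' ∈ W')
    (hr' : h - h' ∈ B.orthogonal W) (hr'' : h - h'' ∈ B.orthogonal W') :
    (∃ σ : V ≃ₗ[K] V, B.IsOrthogonal σ ∧ σ h = h ∧
        W.map (σ : V →ₗ[K] V) = W' ∧ σ h' = h'') ↔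
      (Module.finrank K W = Module.finrank K W' ∧ B h' h' = B h'' h'' ∧
        (h' = h ↔ h'' = h) ∧ (h' = 0 ↔ h'' = 0)) := by
  constructor
  · rintro ⟨σ, hσ, hσh, rfl, rfl⟩
    refine ⟨(σ.finrank_map_eq W).symm, (hσ h' h').symm, ?_, σ.map_eq_zero_iff.symm⟩
    rw [← σ.injective.eq_iff, hσh]
  · rintro ⟨hd, hnorm, heq, hzero⟩
    have pythagoras {U : Submodule K V} {p : V} (hp : p ∈ U) (hr : h - p ∈ B.orthogonal U) :
        B h h = B p p + B (h - p) (h - p) := by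
      simpa using apply_add_add_of_mem_orthogonal hB.isRefl hp hp hr hr
    have hnorm' : B (h - h') (h - h') = B (h - h'') (h - h'') := by
      linear_combination pythagoras hh'' hr'' - pythagoras hh' hr' - hnorm
    have hzero' : h - h' = 0 ↔ h - h'' = 0 := by
      rwa [sub_eq_zero, sub_eq_zero, eq_comm, eq_comm (a := h)]
    obtain ⟨σ, hσW, hσh', hσr⟩ := exists_isometryEquiv_map_eq_and_apply_eq hB hB hnd hnd rfl
      hW hW' hd hh' hh'' hr' hr'' hnorm hnorm' hzero hzero'
    have hσh : σ h = h := by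
      rw [← add_sub_cancel h' h, map_add, hσh', hσr, add_sub_cancel, add_sub_cancel]
    exact ⟨σ, σ.map_app', hσh, hσW, hσh'⟩

end Orbits

theorem IsRegularSubspace.nondegenerate_restrict {V : Type*} [AddCommGroup V] [Module ℂ V]
    {B : LinearMap.BilinForm ℂ V} {W : Submodule ℂ V} (hW : IsRegularSubspace B W) (hB : B.IsRefl) :
    (B.restrict W).Nondegenerate :=
  (LinearMap.IsRefl.domRestrict hB W).nondegenerate_iff_separatingLeft.2 fun x hx ↦
    Subtype.ext (hW x x.2 fun y hy ↦ hx ⟨y, hy⟩)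

theorem IsOrthProj.sub_mem_orthogonal {V : Type*} [AddCommGroup V] [Module ℂ V]
    {B : LinearMap.BilinForm ℂ V} {W : Submodule ℂ V} {x y : V}
    (hy : IsOrthProj B W x y) (hB : B.IsRefl) : x - y ∈ B.orthogonal W :=
  fun w hw ↦ hB _ _ (hy.2 w hw)

/-- for `h ≠ 0` with `⟨h,h⟩ ≠ 0`, two elements `(𝔥', h')`, `(𝔥'', h'')` of
`Reg(𝔥)_h` lie in the same `O(𝔥)_h`-orbit iff they have the same invariant
`(dim 𝔥', ⟨h',h'⟩, [h' = h], [h' = 0])`. -/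
theorem stabilizer_orbits_reg_h_anisotropic
    {V : Type*} [AddCommGroup V] [Module ℂ V] [FiniteDimensional ℂ V]
    (B : LinearMap.BilinForm ℂ V)
    (hsymm : ∀ x y, B x y = B y x) (hnd : B.Nondegenerate)
    (h : V) (hh0 : h ≠ 0) (hhh : B h h ≠ 0)
    (W W' : Submodule ℂ V)
    (hW : IsRegularSubspace B W) (hW' : IsRegularSubspace B W')
    (h' h'' : V) (hp' : IsOrthProj B W h h') (hp'' : IsOrthProj B W' h h'') :
    (∃ σ : V ≃ₗ[ℂ] V, (∀ x y, B (σ x) (σ y) = B x y) ∧ σ h = h ∧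
        W.map (σ : V →ₗ[ℂ] V) = W' ∧ σ h' = h'') ↔
      (Module.finrank ℂ W = Module.finrank ℂ W' ∧ B h' h' = B h'' h'' ∧
        (h' = h ↔ h'' = h) ∧ (h' = 0 ↔ h'' = 0)) :=
  have hB : B.IsSymm := ⟨hsymm⟩
  stabilizer_orbits_reg_h_anisotropic_general hB hnd (hW.nondegenerate_restrict hB.isRefl)
    (hW'.nondegenerate_restrict hB.isRefl) hp'.1 hp''.1 (hp'.sub_mem_orthogonal hB.isRefl)
    (hp''.sub_mem_orthogonal hB.isRefl)
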